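/- Shuffle product of two single T-values: for integers j and k with 2 ≤ j ≤ k − 2, T(j) · T(k−j) = ∑_{ν=2}^{k−1} [ C(ν−1, j−1) + C(ν−1, k−j−1) ] · T(k−ν, ν), where C(n,k) denotes the binomial coefficient. -/

import Mathlib

/-- The multiple T-value `T(k₁, …, k_r)`:
`2^r` times the sum over `0 < m₁ < ⋯ < m_r` with `m_i ≡ i (mod 2)`
of `1 / (m₁^{k₁} ⋯ m_r^{k_r})`. -/
noncomputable def MTV (k : List ℕ) : ℝ :=
  2 ^ k.length *
    ∑' f : {f : Fin k.length → ℕ // StrictMono f ∧ ∀ i, f i % 2 = ((i : ℕ) + 1) % 2},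
      ∏ i : Fin k.length, (1 : ℝ) / (f.1 i : ℝ) ^ k.get i

/-!
Both sides are double sums over pairs `(p, q)` of odd positive integers: `T(j) T(l)` sums
`4 / (p ^ j * q ^ l)`, and `T(a, b)` sums `4 / (p ^ a * (p + q) ^ b)`, because the pairs
`m₁ < m₂` with `m₁` odd and `m₂` even are exactly the pairs `(p, p + q)`. The shuffle product is the
partial fraction expansion of `1 / (p ^ j * q ^ l)` in powers of `1 / (p + q)`, summed over all
`(p, q)`. The expansion itself uses only the relation `a * b = c * (a + b)` between `a = 1 / p`,
`b = 1 / q` and `c = 1 / (p + q)`.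
-/

open Finset

section PartialFractions

variable {R : Type*} [CommSemiring R] {a b c : R}

theorem mul_pow_succ_eq_sum_antidiagonal (h : a * b = c * (a + b)) (m : ℕ) :
    a * b ^ (m + 1) =
      ∑ x ∈ antidiagonal m, b ^ (x.2 + 1) * c ^ (x.1 + 1) + a * c ^ (m + 1) := by
  induction m with
  | zero => simp [h, mul_add, add_comm, mul_comm]
  | succ m ih =>
    calc a * b ^ (m + 1 + 1)
        = a * b ^ (m + 1) * b := by ring
      _ = (∑ x ∈ antidiagonal m, b ^ (x.2 + 1) * c ^ (x.1 + 1)) * b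
            + a * b * c ^ (m + 1) := by rw [ih]; ring
      _ = ∑ x ∈ antidiagonal m, b ^ (x.2 + 1 + 1) * c ^ (x.1 + 1)
            + c * (a + b) * c ^ (m + 1) := by
          rw [h, sum_mul]
          congr! 2
          ring
      _ = ∑ x ∈ antidiagonal (m + 1), b ^ (x.2 + 1) * c ^ (x.1 + 1)
            + a * c ^ (m + 1 + 1) := by
          rw [Nat.sum_antidiagonal_succ']
          ring

theorem mul_pow_succ_eq_sum_choose (h : a * b = c * (a + b)) (m : ℕ) :
    a * b ^ (m + 1) = ∑ x ∈ antidiagonal m,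
      (b ^ (x.2 + 1) + x.1.choose m * a ^ (x.2 + 1)) * c ^ (x.1 + 1) := by
  have hlast : ∑ x ∈ antidiagonal m, (x.1.choose m : R) * a ^ (x.2 + 1) * c ^ (x.1 + 1)
      = a * c ^ (m + 1) := by
    rw [sum_eq_single_of_mem (m, 0) (by simp)]
    · simp
    · rintro ⟨μ, l⟩ hx hne
      have hμ : μ < m := by grind [HasAntidiagonal.mem_antidiagonal]
      simp [Nat.choose_eq_zero_of_lt hμ]
  simp only [mul_pow_succ_eq_sum_antidiagonal h, add_mul, sum_add_distrib, hlast]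

theorem pow_succ_mul_pow_succ_eq_sum_choose (h : a * b = c * (a + b)) (i m : ℕ) :
    a ^ (i + 1) * b ^ (m + 1) = ∑ x ∈ antidiagonal (i + m),
      (x.1.choose i * b ^ (x.2 + 1) + x.1.choose m * a ^ (x.2 + 1)) * c ^ (x.1 + 1) := by
  induction i generalizing m with
  | zero => simpa using mul_pow_succ_eq_sum_choose h m
  | succ i ihi =>
    induction m with
    | zero =>
      have h' : b * a = c * (b + a) := by rw [mul_comm, h, add_comm]
      simpa [mul_comm, add_comm] using mul_pow_succ_eq_sum_choose h' (i + 1)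
    | succ m ihm =>
      calc a ^ (i + 1 + 1) * b ^ (m + 1 + 1)
          = a * b * (a ^ (i + 1) * b ^ (m + 1)) := by ring
        _ = (a ^ (i + 1) * b ^ (m + 1 + 1) + a ^ (i + 1 + 1) * b ^ (m + 1)) * c := by
            rw [h]; ring
        _ = ∑ x ∈ antidiagonal (i + m + 1),
              ((x.1 + 1).choose (i + 1) * b ^ (x.2 + 1)
                + (x.1 + 1).choose (m + 1) * a ^ (x.2 + 1)) * c ^ (x.1 + 1 + 1) := by
            rw [ihi, ihm, Nat.add_right_comm i 1 m, ← add_assoc i m 1, ← sum_add_distrib, sum_mul]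
            simp only [Nat.choose_succ_succ', Nat.cast_add]
            congr! 1
            ring
        _ = ∑ x ∈ antidiagonal (i + 1 + (m + 1)),
              (x.1.choose (i + 1) * b ^ (x.2 + 1)
                + x.1.choose (m + 1) * a ^ (x.2 + 1)) * c ^ (x.1 + 1) := by
            rw [show i + 1 + (m + 1) = i + m + 1 + 1 by ring,
              Nat.sum_antidiagonal_succ (n := i + m + 1)]
            simp only [Nat.choose_zero_succ, Nat.cast_zero, zero_mul, add_zero, zero_add]

theorem pow_mul_pow_eq_sum_choose (h : a * b = c * (a + b)) {j l : ℕ} (hj : 2 ≤ j) (hl : 2 ≤ l) :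
    a ^ j * b ^ l = ∑ ν ∈ Icc 2 (j + l - 1),
      ((ν - 1).choose (j - 1) * (b ^ (j + l - ν) * c ^ ν)
        + (ν - 1).choose (l - 1) * (a ^ (j + l - ν) * c ^ ν)) := by
  obtain ⟨i, rfl⟩ := Nat.exists_eq_add_of_le' hj
  obtain ⟨m, rfl⟩ := Nat.exists_eq_add_of_le' hl
  rw [pow_succ_mul_pow_succ_eq_sum_choose h (i + 1) (m + 1)]
  symm
  refine sum_of_injOn (fun ν => (ν - 1, i + m + 3 - ν)) ?inj ?mapsTo ?vanish ?eq
  case inj =>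
    intro ν hν ν' hν' heq
    grind
  case mapsTo =>
    intro ν hν
    simp only [mem_coe, mem_Icc, HasAntidiagonal.mem_antidiagonal] at hν ⊢
    omega
  case vanish =>
    rintro ⟨μ, n⟩ hx hnot
    have hμ : μ = 0 := by
      by_contra hμ
      have hsum : μ + n = i + 1 + (m + 1) := HasAntidiagonal.mem_antidiagonal.mp hx
      have hmem : μ + 1 ∈ Icc 2 (i + 2 + (m + 2) - 1) := mem_Icc.mpr (by omega)
      exact hnot ⟨μ + 1, hmem, Prod.ext (Nat.add_sub_cancel μ 1) (by grind)⟩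
    simp [hμ]
  case eq =>
    intro ν hν
    obtain ⟨h2, hle⟩ := mem_Icc.mp hν
    rw [show i + 2 + (m + 2) - ν = i + m + 3 - ν + 1 by omega,
      Nat.sub_add_cancel (show 1 ≤ ν by omega)]
    simp only [Nat.add_succ_sub_one]
    ring

theorem inv_pow_mul_inv_pow_eq_sum_choose {K : Type*} [Semifield K] {p q : K} (hp : p ≠ 0)
    (hq : q ≠ 0) (hpq : p + q ≠ 0) {j l : ℕ} (hj : 2 ≤ j) (hl : 2 ≤ l) :
    p⁻¹ ^ j * q⁻¹ ^ l = ∑ ν ∈ Icc 2 (j + l - 1),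
      ((ν - 1).choose (j - 1) * (q⁻¹ ^ (j + l - ν) * (p + q)⁻¹ ^ ν)
        + (ν - 1).choose (l - 1) * (p⁻¹ ^ (j + l - ν) * (p + q)⁻¹ ^ ν)) := by
  have h : p⁻¹ * q⁻¹ = (p + q)⁻¹ * (p⁻¹ + q⁻¹) := by
    field_simp
    ring
  exact pow_mul_pow_eq_sum_choose h hj hl

end PartialFractions

/-- The odd natural numbers, the range of the summation index of a single T-value. -/
abbrev OddNat : Type := {n : ℕ // Odd n}

theorem OddNat.cast_pos (p : OddNat) : (0 : ℝ) < p :=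
  Nat.cast_pos.mpr p.2.pos

/-- The index set of the series defining a multiple T-value of depth `r`: strictly increasing
sequences whose entries are alternately odd and even, starting with an odd one. -/
abbrev MTVIndex (r : ℕ) : Type :=
  {f : Fin r → ℕ // StrictMono f ∧ ∀ i, f i % 2 = ((i : ℕ) + 1) % 2}

/-- Index sequences of length one are odd numbers. -/
def oddNatEquivMTVIndex : OddNat ≃ MTVIndex 1 where
  toFun p := ⟨fun _ => p, Subsingleton.strictMono _, fun i => by grind⟩
  invFun f := ⟨f.1 0, Nat.odd_iff.mpr (f.2.2 0)⟩
  left_inv _ := rfl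
  right_inv f := by
    ext i
    rw [Subsingleton.elim i 0]

/-- Index sequences of length two are the pairs `(p, p + q)` with `p` and `q` odd. -/
def oddNatProdEquivMTVIndex : OddNat × OddNat ≃ MTVIndex 2 where
  toFun x := ⟨![x.1, x.1 + x.2], by
    obtain ⟨⟨p, hp⟩, ⟨q, hq⟩⟩ := x
    constructor
    · simpa [Fin.strictMono_iff_lt_succ] using hq.pos
    · rw [Fin.forall_fin_two]
      exact ⟨Nat.odd_iff.mp hp, Nat.even_iff.mp (hp.add_odd hq)⟩⟩
  invFun f := (⟨f.1 0, Nat.odd_iff.mpr (f.2.2 0)⟩, ⟨f.1 1 - f.1 0, by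
    have h0 : f.1 0 % 2 = 1 := f.2.2 0
    have h1 : f.1 1 % 2 = 0 := f.2.2 1
    have hlt : f.1 0 < f.1 1 := f.2.1 Fin.zero_lt_one
    grind⟩)
  left_inv x := by simp
  right_inv f := by
    have hlt : f.1 0 < f.1 1 := f.2.1 Fin.zero_lt_one
    ext i
    fin_cases i
    · rfl
    · simpa using Nat.add_sub_cancel' hlt.le

theorem MTV_singleton_eq_tsum (j : ℕ) :
    MTV [j] = 2 * ∑' p : OddNat, (p : ℝ)⁻¹ ^ j := by
  change 2 ^ 1 * ∑' f : MTVIndex 1, ∏ i : Fin 1, 1 / (f.1 i : ℝ) ^ [j].get i = _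
  rw [← oddNatEquivMTVIndex.tsum_eq]
  simp [oddNatEquivMTVIndex]

theorem MTV_pair_eq_tsum (a b : ℕ) :
    MTV [a, b] = 4 * ∑' x : OddNat × OddNat, (x.1 : ℝ)⁻¹ ^ a * (x.1 + x.2 : ℝ)⁻¹ ^ b := by
  change 2 ^ 2 * ∑' f : MTVIndex 2, ∏ i : Fin 2, 1 / (f.1 i : ℝ) ^ [a, b].get i = _
  rw [← oddNatProdEquivMTVIndex.tsum_eq, show (2 : ℝ) ^ 2 = 4 by norm_num]
  simp [oddNatProdEquivMTVIndex, Fin.prod_univ_two, mul_comm]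

theorem summable_oddNat_inv_pow {j : ℕ} (hj : 1 < j) :
    Summable fun p : OddNat => (p : ℝ)⁻¹ ^ j := by
  simpa only [inv_pow, Function.comp_def] using
    (Real.summable_nat_pow_inv.mpr hj).comp_injective Subtype.val_injective

theorem summable_oddNat_inv_rpow {s : ℝ} (hs : 1 < s) :
    Summable fun p : OddNat => (p : ℝ)⁻¹ ^ s := by
  simpa only [Real.inv_rpow (Nat.cast_nonneg _), Function.comp_def] using
    (Real.summable_nat_rpow_inv.mpr hs).comp_injective Subtype.val_injective

theorem mul_sq_le_rpow_mul_rpow {u v w : ℝ} (hw : 0 ≤ w) (hwu : w ≤ u) (hwv : w ≤ v) :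
    u * w ^ 2 ≤ u ^ (3 / 2 : ℝ) * v ^ (3 / 2 : ℝ) := by
  have hu : 0 ≤ u := hw.trans hwu
  calc u * w ^ 2 = u * (w ^ (1 / 2 : ℝ) * w ^ (3 / 2 : ℝ)) := by
        rw [← Real.rpow_add_of_nonneg hw (by norm_num) (by norm_num), ← Real.rpow_natCast]
        norm_num
    _ ≤ u * (u ^ (1 / 2 : ℝ) * v ^ (3 / 2 : ℝ)) := by gcongr
    _ = u ^ (3 / 2 : ℝ) * v ^ (3 / 2 : ℝ) := by
        rw [← mul_assoc, ← Real.rpow_one_add' hu (by norm_num)]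
        norm_num

theorem summable_oddNat_inv_pow_mul_inv_add_pow {a b : ℕ} (ha : 1 ≤ a) (hb : 2 ≤ b) :
    Summable fun x : OddNat × OddNat => (x.1 : ℝ)⁻¹ ^ a * (x.1 + x.2 : ℝ)⁻¹ ^ b := by
  have hs := summable_oddNat_inv_rpow (s := 3 / 2) (by norm_num)
  refine .of_nonneg_of_le (fun _ => by positivity) (fun ⟨⟨p, hp⟩, ⟨q, hq⟩⟩ => ?_)
    (hs.mul_of_nonneg hs (fun _ => by positivity) (fun _ => by positivity))
  have hp1 : (1 : ℝ) ≤ p := mod_cast hp.pos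
  have hq1 : (1 : ℝ) ≤ q := mod_cast hq.pos
  calc (p : ℝ)⁻¹ ^ a * (p + q : ℝ)⁻¹ ^ b
      ≤ (p : ℝ)⁻¹ ^ 1 * (p + q : ℝ)⁻¹ ^ 2 := by
        gcongr ?_ * ?_
        · exact pow_le_pow_of_le_one (by positivity) (inv_le_one_of_one_le₀ hp1) ha
        · exact pow_le_pow_of_le_one (by positivity) (inv_le_one_of_one_le₀ (by linarith)) hb
    _ ≤ (p : ℝ)⁻¹ ^ (3 / 2 : ℝ) * (q : ℝ)⁻¹ ^ (3 / 2 : ℝ) := by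
        rw [pow_one]
        refine mul_sq_le_rpow_mul_rpow (by positivity) ?_ ?_ <;> gcongr <;> linarith

theorem hasSum_MTV_singleton {j : ℕ} (hj : 2 ≤ j) :
    HasSum (fun p : OddNat => (p : ℝ)⁻¹ ^ j) (MTV [j] / 2) := by
  rw [MTV_singleton_eq_tsum, mul_div_cancel_left₀ _ two_ne_zero]
  exact (summable_oddNat_inv_pow hj).hasSum

theorem hasSum_MTV_pair {a b : ℕ} (ha : 1 ≤ a) (hb : 2 ≤ b) :
    HasSum (fun x : OddNat × OddNat => (x.1 : ℝ)⁻¹ ^ a * (x.1 + x.2 : ℝ)⁻¹ ^ b)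
      (MTV [a, b] / 4) := by
  rw [MTV_pair_eq_tsum, mul_div_cancel_left₀ _ four_ne_zero]
  exact (summable_oddNat_inv_pow_mul_inv_add_pow ha hb).hasSum

theorem hasSum_MTV_pair_swap {a b : ℕ} (ha : 1 ≤ a) (hb : 2 ≤ b) :
    HasSum (fun x : OddNat × OddNat => (x.2 : ℝ)⁻¹ ^ a * (x.1 + x.2 : ℝ)⁻¹ ^ b)
      (MTV [a, b] / 4) := by
  simpa [Function.comp_def, add_comm] using
    (Equiv.prodComm OddNat OddNat).hasSum_iff.mpr (hasSum_MTV_pair ha hb)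

theorem hasSum_MTV_mul_MTV {j l : ℕ} (hj : 2 ≤ j) (hl : 2 ≤ l) :
    HasSum (fun x : OddNat × OddNat => (x.1 : ℝ)⁻¹ ^ j * (x.2 : ℝ)⁻¹ ^ l)
      (MTV [j] * MTV [l] / 4) := by
  have hJ := hasSum_MTV_singleton hj
  have hL := hasSum_MTV_singleton hl
  have hJL := hJ.summable.mul_of_nonneg hL.summable (fun _ => by positivity)
    (fun _ => by positivity)
  have hfactor : MTV [j] * MTV [l] / 4 = MTV [j] / 2 * (MTV [l] / 2) := by ring
  rw [hfactor]
  exact hJ.mul hL hJL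

theorem hasSum_sum_choose_mul_MTV_pair {j l : ℕ} (hj : 2 ≤ j) (hl : 2 ≤ l) :
    HasSum (fun x : OddNat × OddNat => (x.1 : ℝ)⁻¹ ^ j * (x.2 : ℝ)⁻¹ ^ l)
      (∑ ν ∈ Icc 2 (j + l - 1),
        (((ν - 1).choose (j - 1) : ℝ) + (ν - 1).choose (l - 1)) * (MTV [j + l - ν, ν] / 4)) := by
  have hexpand (x : OddNat × OddNat) :=
    inv_pow_mul_inv_pow_eq_sum_choose x.1.cast_pos.ne' x.2.cast_pos.ne'
      (add_pos x.1.cast_pos x.2.cast_pos).ne' hj hl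
  simp only [hexpand, add_mul]
  refine hasSum_sum fun ν hν => ?_
  obtain ⟨hν2, hνk⟩ := mem_Icc.mp hν
  have hweight : 1 ≤ j + l - ν := by omega
  exact ((hasSum_MTV_pair_swap hweight hν2).mul_left _).add
    ((hasSum_MTV_pair hweight hν2).mul_left _)

/-- **Lemma (shuffle product of two single T-values).** For `2 ≤ j ≤ k − 2`,
`T(j) T(k−j) = ∑_{ν=2}^{k−1} [ C(ν−1, j−1) + C(ν−1, k−j−1) ] T(k−ν, ν)`. -/
theorem MTV_shuffle_single (j k : ℕ) (hj : 2 ≤ j) (hk : j ≤ k - 2) :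
    MTV [j] * MTV [k - j]
      = ∑ ν ∈ Finset.Icc 2 (k - 1),
          (((ν - 1).choose (j - 1) : ℝ) + ((ν - 1).choose (k - j - 1) : ℝ))
            * MTV [k - ν, ν] := by
  obtain ⟨l, rfl⟩ := Nat.exists_eq_add_of_le (show j ≤ k by omega)
  have hl : 2 ≤ l := by omega
  rw [Nat.add_sub_cancel_left]
  have hquarter := (hasSum_MTV_mul_MTV hj hl).unique (hasSum_sum_choose_mul_MTV_pair hj hl)
  simp only [← mul_div_assoc, ← sum_div] at hquarter
  exact (div_left_inj' four_ne_zero).mp hquarter
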